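/- arXiv:2411.01293 — 2 statements merged into one kernel-verified Lean document; each statement's English description precedes it below -/
import Mathlib

section
/- Let D be a positive natural number, p : ℝ → ℝ^D → ℝ a smooth everywhere-positive function, F : ℝ → ℝ^D → ℝ^D a smooth time-dependent vector field, and g : ℝ → ℝ. If p satisfies the Fokker–Planck equation ∂_t p(t,x) = -div_x(F(t,x)·p(t,x)) + (1/2)·g(t)²·Δ_x p(t,x) for all t ∈ ℝ and x ∈ ℝ^D, then p also satisfies the continuity (Liouville) equation ∂_t p(t,x) = -div_x((F(t,x) - (1/2)·g(t)²·∇_x log p(t,x))·p(t,x)) for all t and x; that is, the marginal density of the diffusion also solves the transport equation of the probability-flow ODE with drift F(t,x) - (1/2)·g(t)²·∇_x log p(t,x). -/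
open scoped BigOperators RealInnerProductSpace
open MeasureTheory

/-- Divergence of a vector field on `EuclideanSpace ℝ (Fin D)`. -/
noncomputable def divg {D : ℕ} (F : EuclideanSpace ℝ (Fin D) → EuclideanSpace ℝ (Fin D))
    (x : EuclideanSpace ℝ (Fin D)) : ℝ :=
  ∑ i, fderiv ℝ F x (EuclideanSpace.single i 1) i

/-- Laplacian of a scalar field on `EuclideanSpace ℝ (Fin D)`. -/
noncomputable def lap {D : ℕ} (f : EuclideanSpace ℝ (Fin D) → ℝ)
    (x : EuclideanSpace ℝ (Fin D)) : ℝ :=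
  divg (gradient f) x

/-!
Since `p ∇ log p = ∇ p`, the diffusive flux `c ∇ p` is the flux of `p` along the velocity field
`c ∇ log p`. Its divergence is `c Δ p`, so moving it into the drift turns the Fokker–Planck
equation into the continuity equation.
-/

section Gradient

variable {E : Type*} [NormedAddCommGroup E] [InnerProductSpace ℝ E] [CompleteSpace E]
  {f : E → ℝ} {x : E}

theorem contDiffAt_gradient {m n : WithTop ℕ∞} (hf : ContDiffAt ℝ n f x) (hmn : m + 1 ≤ n) :
    ContDiffAt ℝ m (gradient f) x :=
  (InnerProductSpace.toDual ℝ E).symm.contDiff.contDiffAt.comp x (hf.fderiv_right hmn)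

theorem gradient_log (hf : DifferentiableAt ℝ f x) (hx : f x ≠ 0) :
    gradient (fun y => Real.log (f y)) x = (f x)⁻¹ • gradient f x := by
  simp only [gradient, fderiv.log hf hx, map_smul]

theorem smul_gradient_log (hf : DifferentiableAt ℝ f x) (hx : f x ≠ 0) :
    f x • gradient (fun y => Real.log (f y)) x = gradient f x := by
  rw [gradient_log hf hx, smul_inv_smul₀ hx]

end Gradient

section Divergence

variable {D : ℕ} {F G : EuclideanSpace ℝ (Fin D) → EuclideanSpace ℝ (Fin D)}
  {f : EuclideanSpace ℝ (Fin D) → ℝ} {x : EuclideanSpace ℝ (Fin D)}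

theorem divg_congr (h : F =ᶠ[nhds x] G) : divg F x = divg G x := by
  simp only [divg, h.fderiv_eq]

theorem divg_sub (hF : DifferentiableAt ℝ F x) (hG : DifferentiableAt ℝ G x) :
    divg (fun y => F y - G y) x = divg F x - divg G x := by
  simp only [divg, fderiv_fun_sub hF hG, sub_apply, PiLp.sub_apply, Finset.sum_sub_distrib]

theorem divg_const_smul (c : ℝ) : divg (fun y => c • F y) x = c * divg F x := by
  have hfderiv : fderiv ℝ (fun y => c • F y) x = c • fderiv ℝ F x :=
    congrFun (fderiv_const_smul_field c) x
  simp only [divg, hfderiv, smul_apply, PiLp.smul_apply, smul_eq_mul, Finset.mul_sum]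

theorem divg_smul_sub_gradient_log (c : ℝ) (hf : ContDiffAt ℝ 2 f x) (hx : f x ≠ 0)
    (hF : DifferentiableAt ℝ F x) :
    divg (fun y => f y • (F y - c • gradient (fun z => Real.log (f z)) y)) x
      = divg (fun y => f y • F y) x - c * lap f x := by
  have hfd : DifferentiableAt ℝ f x := hf.differentiableAt two_ne_zero
  have hgrad : DifferentiableAt ℝ (gradient f) x :=
    (contDiffAt_gradient (m := 1) hf (by norm_num)).differentiableAt one_ne_zero
  have hflux : (fun y => f y • (F y - c • gradient (fun z => Real.log (f z)) y))
      =ᶠ[nhds x] fun y => f y • F y - c • gradient f y := by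
    filter_upwards [hf.eventually (by simp), hfd.continuousAt.eventually_ne hx] with y hy hy0
    rw [smul_sub, smul_comm, smul_gradient_log (hy.differentiableAt two_ne_zero) hy0]
  rw [divg_congr hflux, divg_sub (hfd.fun_smul hF) (hgrad.fun_const_smul c), divg_const_smul, lap]

end Divergence

theorem pf_ode_continuity_equation_general {D : ℕ}
    {p : ℝ → EuclideanSpace ℝ (Fin D) → ℝ}
    {F : ℝ → EuclideanSpace ℝ (Fin D) → EuclideanSpace ℝ (Fin D)}
    {g : ℝ → ℝ} {t : ℝ} {x : EuclideanSpace ℝ (Fin D)}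
    (hp : ContDiffAt ℝ 2 (p t) x) (hpos : 0 < p t x) (hF : DifferentiableAt ℝ (F t) x)
    (hFP : HasDerivAt (fun τ => p τ x)
      (-divg (fun y => p t y • F t y) x + (1 / 2) * g t ^ 2 * lap (p t) x) t) :
    HasDerivAt (fun τ => p τ x)
      (-divg (fun y => p t y •
          (F t y - ((1 / 2) * g t ^ 2) • gradient (fun z => Real.log (p t z)) y)) x) t := by
  rwa [divg_smul_sub_gradient_log _ hp hpos.ne' hF, neg_sub, sub_eq_neg_add]

/-- The marginal density of the diffusion also solves the continuity
(Liouville) equation of the probability-flow ODE. -/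
theorem pf_ode_continuity_equation {D : ℕ} (hD : 0 < D)
    (p : ℝ → EuclideanSpace ℝ (Fin D) → ℝ)
    (F : ℝ → EuclideanSpace ℝ (Fin D) → EuclideanSpace ℝ (Fin D))
    (g : ℝ → ℝ)
    (hp : ContDiff ℝ (⊤ : ℕ∞) (fun q : ℝ × EuclideanSpace ℝ (Fin D) => p q.1 q.2))
    (hppos : ∀ t x, 0 < p t x)
    (hF : ContDiff ℝ (⊤ : ℕ∞) (fun q : ℝ × EuclideanSpace ℝ (Fin D) => F q.1 q.2))
    (hFP : ∀ t x, deriv (fun τ => p τ x) t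
      = - divg (fun y => p t y • F t y) x + (1 / 2) * g t ^ 2 * lap (p t) x) :
    ∀ t x, deriv (fun τ => p τ x) t
      = - divg (fun y => p t y •
          (F t y - ((1 / 2) * g t ^ 2) • gradient (fun z => Real.log (p t z)) y)) x := by
  intro t x
  have hpt : Differentiable ℝ fun τ => p τ x :=
    (hp.comp (contDiff_prodMk_left x)).differentiable (by simp)
  have hpx : ContDiff ℝ 2 (p t) := (hp.comp (contDiff_prodMk_right t)).of_le (by norm_cast)
  have hFx : Differentiable ℝ (F t) :=
    (hF.comp (contDiff_prodMk_right t)).differentiable (by simp)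
  exact (pf_ode_continuity_equation_general hpx.contDiffAt (hppos t x) (hFx x)
    (hFP t x ▸ (hpt t).hasDerivAt)).deriv
end

section
/- Let D be a positive natural number, p : ℝ → ℝ^D → ℝ a smooth everywhere-positive function, F : ℝ → ℝ^D → ℝ^D a smooth time-dependent vector field, g : ℝ → ℝ, and β : ℝ → ℝ. If p satisfies the Fokker–Planck equation ∂_t p(t,x) = -div_x(F(t,x)·p(t,x)) + (1/2)·g(t)²·Δ_x p(t,x) for all t ∈ ℝ and x ∈ ℝ^D, then for all t and x: ∂_t log p(t,x) + ⟨∇_x log p(t,x), F(t,x) - (1/2 + β(t))·g(t)²·∇_x log p(t,x)⟩ - β(t)·g(t)²·Δ_x log p(t,x) = -div_x F(t,x) - (β(t) - 1/2)·g(t)²·Δ_x log p(t,x) - β(t)·g(t)²·‖∇_x log p(t,x)‖². -/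
open scoped BigOperators RealInnerProductSpace
open MeasureTheory

/-!
Along `p ≠ 0` one has `∇p = p ∇log p`, and taking the divergence gives
`Δp = p (Δ log p + ‖∇log p‖²)`. Dividing the Fokker–Planck equation by `p` therefore yields a closed
equation for `log p`,
`∂ₜ log p = -div F - ⟪∇log p, F⟫ + (g² / 2) (Δ log p + ‖∇log p‖²)`,
and in the drift of the reverse SDE the transport terms `⟪∇log p, F⟫` cancel.
-/

open Filter Topology

section Gradient

variable {E : Type*} [NormedAddCommGroup E] [InnerProductSpace ℝ E] [CompleteSpace E]
  {f : E → ℝ} {x : E}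

theorem gradient_eq_smul_gradient_log (hf : DifferentiableAt ℝ f x) (hx : f x ≠ 0) :
    gradient f x = f x • gradient (fun y => Real.log (f y)) x := by
  simp only [gradient, fderiv.log hf hx, map_smul, smul_inv_smul₀ hx]

theorem differentiableAt_gradient (hf : ContDiffAt ℝ 2 f x) :
    DifferentiableAt ℝ (gradient f) x :=
  (InnerProductSpace.toDual ℝ E).symm.differentiable.differentiableAt.comp x
    ((hf.fderiv_right (m := 1) (by norm_num)).differentiableAt one_ne_zero)

end Gradient

section Divergence

variable {D : ℕ} {f : EuclideanSpace ℝ (Fin D) → ℝ}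
  {G H : EuclideanSpace ℝ (Fin D) → EuclideanSpace ℝ (Fin D)} {x : EuclideanSpace ℝ (Fin D)}

theorem inner_gradient_eq_sum_fderiv_single_mul (v : EuclideanSpace ℝ (Fin D)) :
    ⟪gradient f x, v⟫ = ∑ i, fderiv ℝ f x (EuclideanSpace.single i 1) * v i := by
  simpa [EuclideanSpace.inner_single_left] using
    ((EuclideanSpace.basisFun (Fin D) ℝ).sum_inner_mul_inner (gradient f x) v).symm

theorem divg_congr_of_eventuallyEq (h : G =ᶠ[𝓝 x] H) : divg G x = divg H x := by
  simp only [divg, h.fderiv_eq]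

theorem divg_smul (hf : DifferentiableAt ℝ f x) (hG : DifferentiableAt ℝ G x) :
    divg (fun y => f y • G y) x = f x * divg G x + ⟪gradient f x, G x⟫ := by
  rw [inner_gradient_eq_sum_fderiv_single_mul]
  simp [divg, fderiv_fun_smul hf hG, Finset.sum_add_distrib, Finset.mul_sum]

theorem lap_eq_mul_lap_log_add (hf : ContDiffAt ℝ 2 f x) (hx : f x ≠ 0) :
    lap f x = f x * (lap (fun y => Real.log (f y)) x
      + ‖gradient (fun y => Real.log (f y)) x‖ ^ 2) := by
  have hf' : DifferentiableAt ℝ f x := hf.differentiableAt two_ne_zero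
  have hgrad : gradient f =ᶠ[𝓝 x] fun y => f y • gradient (fun z => Real.log (f z)) y := by
    filter_upwards [hf.eventually (by simp), hf.continuousAt.eventually_ne hx] with y hfy hy
    exact gradient_eq_smul_gradient_log (hfy.differentiableAt two_ne_zero) hy
  calc lap f x = divg (fun y => f y • gradient (fun z => Real.log (f z)) y) x :=
        divg_congr_of_eventuallyEq hgrad
    _ = f x * lap (fun y => Real.log (f y)) x
          + ⟪gradient f x, gradient (fun y => Real.log (f y)) x⟫ :=
        divg_smul hf' (differentiableAt_gradient (hf.log hx))
    _ = _ := by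
        rw [gradient_eq_smul_gradient_log hf' hx, real_inner_smul_left,
          real_inner_self_eq_norm_sq, mul_add]

end Divergence

section FokkerPlanck

variable {D : ℕ} {p : ℝ → EuclideanSpace ℝ (Fin D) → ℝ} {t : ℝ} {x : EuclideanSpace ℝ (Fin D)}

theorem deriv_log_of_fokkerPlanck {v : EuclideanSpace ℝ (Fin D) → EuclideanSpace ℝ (Fin D)} {c : ℝ}
    (hpt : DifferentiableAt ℝ (fun τ => p τ x) t) (hpx : ContDiffAt ℝ 2 (p t) x)
    (hp0 : p t x ≠ 0) (hv : DifferentiableAt ℝ v x)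
    (hFP : deriv (fun τ => p τ x) t = -divg (fun y => p t y • v y) x + c * lap (p t) x) :
    deriv (fun τ => Real.log (p τ x)) t
      = -divg v x - ⟪gradient (fun y => Real.log (p t y)) x, v x⟫
        + c * (lap (fun y => Real.log (p t y)) x
          + ‖gradient (fun y => Real.log (p t y)) x‖ ^ 2) := by
  have hpx' : DifferentiableAt ℝ (p t) x := hpx.differentiableAt two_ne_zero
  rw [deriv.log hpt hp0, hFP, divg_smul hpx' hv, gradient_eq_smul_gradient_log hpx' hp0,
    real_inner_smul_left, lap_eq_mul_lap_log_add hpx hp0]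
  field_simp
  ring

theorem ito_drift_general_reverse_general
    {F : ℝ → EuclideanSpace ℝ (Fin D) → EuclideanSpace ℝ (Fin D)} {g β : ℝ → ℝ}
    (hpt : DifferentiableAt ℝ (fun τ => p τ x) t) (hpx : ContDiffAt ℝ 2 (p t) x)
    (hppos : 0 < p t x) (hF : DifferentiableAt ℝ (F t) x)
    (hFP : deriv (fun τ => p τ x) t
      = -divg (fun y => p t y • F t y) x + (1 / 2) * g t ^ 2 * lap (p t) x) :
    deriv (fun τ => Real.log (p τ x)) t
        + ⟪gradient (fun y => Real.log (p t y)) x,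
            F t x - ((1 / 2 + β t) * g t ^ 2) • gradient (fun y => Real.log (p t y)) x⟫
        - β t * g t ^ 2 * lap (fun y => Real.log (p t y)) x
      = -divg (F t) x
        - (β t - 1 / 2) * g t ^ 2 * lap (fun y => Real.log (p t y)) x
        - β t * g t ^ 2 * ‖gradient (fun y => Real.log (p t y)) x‖ ^ 2 := by
  rw [deriv_log_of_fokkerPlanck hpt hpx hppos.ne' hF hFP, inner_sub_right, real_inner_smul_right,
    real_inner_self_eq_norm_sq]
  ring

end FokkerPlanck

/-- Itô drift of `log p` along the general β-reverse SDE of Karras et al.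
(analytic core of the Appendix G reverse proposition). -/
theorem ito_drift_general_reverse {D : ℕ} (hD : 0 < D)
    (p : ℝ → EuclideanSpace ℝ (Fin D) → ℝ)
    (F : ℝ → EuclideanSpace ℝ (Fin D) → EuclideanSpace ℝ (Fin D))
    (g β : ℝ → ℝ)
    (hp : ContDiff ℝ (⊤ : ℕ∞) (fun q : ℝ × EuclideanSpace ℝ (Fin D) => p q.1 q.2))
    (hppos : ∀ t x, 0 < p t x)
    (hF : ContDiff ℝ (⊤ : ℕ∞) (fun q : ℝ × EuclideanSpace ℝ (Fin D) => F q.1 q.2))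
    (hFP : ∀ t x, deriv (fun τ => p τ x) t
      = - divg (fun y => p t y • F t y) x + (1 / 2) * g t ^ 2 * lap (p t) x) :
    ∀ t x, deriv (fun τ => Real.log (p τ x)) t
        + ⟪gradient (fun y => Real.log (p t y)) x,
            F t x - ((1 / 2 + β t) * g t ^ 2) • gradient (fun y => Real.log (p t y)) x⟫
        - β t * g t ^ 2 * lap (fun y => Real.log (p t y)) x
      = - divg (F t) x
        - (β t - 1 / 2) * g t ^ 2 * lap (fun y => Real.log (p t y)) x
        - β t * g t ^ 2 * ‖gradient (fun y => Real.log (p t y)) x‖ ^ 2 := by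
  intro t x
  have hpt : DifferentiableAt ℝ (fun τ => p τ x) t :=
    (hp.comp (contDiff_id.prodMk contDiff_const)).differentiable (by simp) t
  have hpx : ContDiffAt ℝ 2 (p t) x :=
    ((contDiff_infty.mp hp 2).comp (contDiff_const.prodMk contDiff_id)).contDiffAt
  have hFt : DifferentiableAt ℝ (F t) x :=
    (hF.comp (contDiff_const.prodMk contDiff_id)).differentiable (by simp) x
  exact ito_drift_general_reverse_general hpt hpx (hppos t x) hFt (hFP t x)
end
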